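/- Let ρ > 0, let ψ : ℝ^d → ℝ be differentiable and ρ-strongly convex, let L ≥ 0, let g : ℝ^d → ℝ be L-Lipschitz, and let λ > 0. Then for every x ∈ ℝ^d, 0 ≤ g(x) − env←_{λ,g}^ψ(x) ≤ λL²/(2ρ), and likewise 0 ≤ g(x) − env→_{λ,g}^ψ(x) ≤ λL²/(2ρ). -/

import Mathlib

open scoped RealInnerProductSpace

/-- The Bregman divergence associated with a differentiable function `ψ`. -/
noncomputable def bregmanDiv {d : ℕ} (ψ : EuclideanSpace ℝ (Fin d) → ℝ)
    (x y : EuclideanSpace ℝ (Fin d)) : ℝ :=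
  ψ x - ψ y - ⟪gradient ψ y, x - y⟫

/-- The left Bregman–Moreau envelope of `g` associated with `ψ`. -/
noncomputable def leftEnv {d : ℕ} (ψ g : EuclideanSpace ℝ (Fin d) → ℝ) (lam : ℝ)
    (x : EuclideanSpace ℝ (Fin d)) : ℝ :=
  ⨅ y : EuclideanSpace ℝ (Fin d), (g y + (1 / lam) * bregmanDiv ψ y x)

/-- The right Bregman–Moreau envelope of `g` associated with `ψ`. -/
noncomputable def rightEnv {d : ℕ} (ψ g : EuclideanSpace ℝ (Fin d) → ℝ) (lam : ℝ)
    (x : EuclideanSpace ℝ (Fin d)) : ℝ :=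
  ⨅ y : EuclideanSpace ℝ (Fin d), (g y + (1 / lam) * bregmanDiv ψ x y)

/-! Moving from `x` to `y` lowers `g` by at most `L * dist x y`, while a penalty with quadratic
growth costs at least `ρ / (2 * λ) * dist x y ^ 2`. The net gain is therefore at most the maximum
`λ * L ^ 2 / (2 * ρ)` of `L * r - ρ / (2 * λ) * r ^ 2` over `r`. Only this growth matters, so the
two arguments of the divergence may be exchanged. -/

lemma mul_sub_half_mul_sq_le {a : ℝ} (ha : 0 < a) (b r : ℝ) :
    b * r - a / 2 * r ^ 2 ≤ b ^ 2 / (2 * a) := by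
  have hsquare : b ^ 2 / (2 * a) - (b * r - a / 2 * r ^ 2) = (b - a * r) ^ 2 / (2 * a) := by
    field_simp
    ring
  have hnonneg : 0 ≤ (b - a * r) ^ 2 / (2 * a) := by positivity
  linarith

lemma sub_iInf_mem_Icc {ι : Type*} {f : ι → ℝ} {c : ℝ} (i : ι) (hf : ∀ j, f i - c ≤ f j) :
    f i - ⨅ j, f j ∈ Set.Icc 0 c := by
  have : Nonempty ι := ⟨i⟩
  have hbdd : BddBelow (Set.range f) := ⟨f i - c, Set.forall_mem_range.2 hf⟩
  exact ⟨sub_nonneg.2 (ciInf_le hbdd i), sub_le_comm.1 (le_ciInf hf)⟩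

section PseudoMetricSpace

variable {X : Type*} [PseudoMetricSpace X] {g : X → ℝ} {L : NNReal}

lemma sub_iInf_add_mem_Icc_of_lipschitzWith {p : X → ℝ} {a : ℝ} {x : X} (ha : 0 < a)
    (hg : LipschitzWith L g) (hpx : p x = 0) (hp : ∀ y, a / 2 * dist x y ^ 2 ≤ p y) :
    g x - ⨅ y, (g y + p y) ∈ Set.Icc 0 ((L : ℝ) ^ 2 / (2 * a)) := by
  have hbound : ∀ y, g x + p x - (L : ℝ) ^ 2 / (2 * a) ≤ g y + p y := fun y => by
    have hdecrease : g x ≤ g y + L * dist x y := hg.le_add_mul x y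
    have hgain := mul_sub_half_mul_sq_le ha L (dist x y)
    linarith [hp y]
  simpa only [Pi.add_apply, hpx, add_zero] using sub_iInf_mem_Icc (f := g + p) x hbound

theorem stmt1_general {D : X → X → ℝ} {ρ lam : ℝ} (hρ : 0 < ρ) (hlam : 0 < lam)
    (hg : LipschitzWith L g) (hD_self : ∀ x, D x x = 0)
    (hD : ∀ x y, ρ / 2 * dist x y ^ 2 ≤ D x y) (x : X) :
    g x - ⨅ y, (g y + 1 / lam * D y x) ∈ Set.Icc 0 (lam * (L : ℝ) ^ 2 / (2 * ρ)) ∧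
      g x - ⨅ y, (g y + 1 / lam * D x y) ∈ Set.Icc 0 (lam * (L : ℝ) ^ 2 / (2 * ρ)) := by
  have hconst : lam * (L : ℝ) ^ 2 / (2 * ρ) = (L : ℝ) ^ 2 / (2 * (ρ / lam)) := by field_simp
  have hscale {r s : ℝ} (h : ρ / 2 * r ^ 2 ≤ s) : ρ / lam / 2 * r ^ 2 ≤ 1 / lam * s :=
    calc ρ / lam / 2 * r ^ 2 = 1 / lam * (ρ / 2 * r ^ 2) := by ring
      _ ≤ 1 / lam * s := by gcongr
  have hzero : 1 / lam * D x x = 0 := by rw [hD_self, mul_zero]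
  rw [hconst]
  exact ⟨sub_iInf_add_mem_Icc_of_lipschitzWith (div_pos hρ hlam) hg hzero
      fun y => hscale (dist_comm x y ▸ hD y x),
    sub_iInf_add_mem_Icc_of_lipschitzWith (div_pos hρ hlam) hg hzero fun y => hscale (hD x y)⟩

end PseudoMetricSpace

section BregmanDiv

variable {d : ℕ} {ψ : EuclideanSpace ℝ (Fin d) → ℝ}

lemma bregmanDiv_self (x : EuclideanSpace ℝ (Fin d)) : bregmanDiv ψ x x = 0 := by
  simp [bregmanDiv]

lemma le_bregmanDiv_iff {c : ℝ} {x y : EuclideanSpace ℝ (Fin d)} :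
    c ≤ bregmanDiv ψ x y ↔ ψ y + ⟪gradient ψ y, x - y⟫ + c ≤ ψ x := by
  rw [bregmanDiv, sub_sub, le_sub_iff_add_le']

end BregmanDiv

/-- If `ψ` is differentiable and `ρ`-strongly convex and `g` is `L`-Lipschitz, then
`0 ≤ g(x) − env←_{λ,g}^ψ(x) ≤ λ L² / (2ρ)`, and likewise for the right envelope. -/
theorem stmt1 {d : ℕ} (ρ : ℝ) (hρ : 0 < ρ)
    (ψ : EuclideanSpace ℝ (Fin d) → ℝ)
    (hdiff : Differentiable ℝ ψ)
    (hsc : ∀ y ytil : EuclideanSpace ℝ (Fin d),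
      ψ ytil + ⟪gradient ψ ytil, y - ytil⟫ + ρ / 2 * ‖y - ytil‖ ^ 2 ≤ ψ y)
    (L : ℝ) (hL : 0 ≤ L)
    (g : EuclideanSpace ℝ (Fin d) → ℝ)
    (hg : ∀ x y, |g x - g y| ≤ L * ‖x - y‖)
    (lam : ℝ) (hlam : 0 < lam) :
    ∀ x : EuclideanSpace ℝ (Fin d),
      (0 ≤ g x - leftEnv ψ g lam x ∧ g x - leftEnv ψ g lam x ≤ lam * L ^ 2 / (2 * ρ)) ∧
      (0 ≤ g x - rightEnv ψ g lam x ∧ g x - rightEnv ψ g lam x ≤ lam * L ^ 2 / (2 * ρ)) := by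
  lift L to NNReal using hL
  have hLip : LipschitzWith L g := .of_dist_le_mul fun y z => dist_eq_norm y z ▸ hg y z
  exact stmt1_general hρ hlam hLip bregmanDiv_self fun y z =>
    le_bregmanDiv_iff.2 (dist_eq_norm y z ▸ hsc y z)
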